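/- (Soundness of reduction rule R6, contraction.) Let G=(V,A) be a finite loopless digraph and suppose V is partitioned into two disjoint sets V₁ and V₂ with a ∈ V₁, b ∈ V₂, r ∈ V₁, |V₂| ≥ 2, such that the only arc of A with tail in V₁ and head in V₂ is (a,b). Let G* be the digraph obtained from G by contracting the arc (a,b): its vertex set is V \ {b} and its arc set is {(x,y) ∈ A : x ≠ b, y ≠ b} ∪ {(a,y) : (b,y) ∈ A, y ≠ a} ∪ {(x,a) : (x,b) ∈ A, x ≠ a}. Then for every natural number k, G has a spanning out-tree rooted at r with at least k leaves if and only if G* has a spanning out-tree rooted at r with at least k leaves. -/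

import Mathlib

variable {V : Type*} [DecidableEq V] [Fintype V]

/-- The vertex set of an arc set `T` together with the root `r`. -/
def dverts (r : V) (T : Finset (V × V)) : Finset V :=
  insert r (T.image Prod.fst ∪ T.image Prod.snd)

/-- In-degree of `v` in the arc set `T`. -/
def dInDeg (T : Finset (V × V)) (v : V) : ℕ :=
  (T.filter fun a => a.2 = v).card

/-- Out-degree of `v` in the arc set `T`. -/
def dOutDeg (T : Finset (V × V)) (v : V) : ℕ :=
  (T.filter fun a => a.1 = v).card

/-- Reachability by a directed path using only arcs of `T`. -/
def DReach (T : Finset (V × V)) (x y : V) : Prop :=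
  Relation.ReflTransGen (fun a b => (a, b) ∈ T) x y

/-- A loopless arc set. -/
def DLoopless (A : Finset (V × V)) : Prop := ∀ a ∈ A, a.1 ≠ a.2

/-- `T` is an out-tree of the digraph with arc set `A`, rooted at `r`. -/
def IsOutTree (A : Finset (V × V)) (r : V) (T : Finset (V × V)) : Prop :=
  T ⊆ A ∧ dInDeg T r = 0 ∧ (∀ v ∈ dverts r T, v ≠ r → dInDeg T v = 1) ∧
    ∀ v ∈ dverts r T, DReach T r v

/-- `T` is a spanning out-tree of the digraph with arc set `A`, rooted at `r`. -/
def IsSpanningOutTree (A : Finset (V × V)) (r : V) (T : Finset (V × V)) : Prop :=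
  IsOutTree A r T ∧ dverts r T = Finset.univ

/-- The leaves of an out-tree: vertices of out-degree 0. -/
def dleaves (r : V) (T : Finset (V × V)) : Finset V :=
  (dverts r T).filter fun v => dOutDeg T v = 0

/-- `T` is an out-tree of the digraph with arc set `A` rooted at `r`
whose vertex set is exactly `W`. -/
def IsSpanningOutTreeOn (W : Finset V) (A : Finset (V × V)) (r : V)
    (T : Finset (V × V)) : Prop :=
  IsOutTree A r T ∧ dverts r T = W

/-! Every spanning out-tree must enter `V₂` through the arc `(a, b)`, since that is the only arc
from `V₁` to `V₂`, and it must leave `b` again because `V₂` has another vertex. So contracting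
`(a, b)` in the tree loses no leaf. Conversely, in a spanning out-tree of the contracted digraph
every arc from `V₁` to `V₂` leaves `a`; an arc from `V₂` to `a` would therefore close a cycle, which
means that all the tree arcs absent from `A` come from arcs of `A` leaving `b`. Giving them their
tail `b` back and adding `(a, b)` recovers a spanning out-tree with the same leaves. -/

section Relation

variable {α : Type*} {R : α → α → Prop} {x y : α}

theorem exists_rel_exit_of_reflTransGen {p : α → Prop} (h : Relation.ReflTransGen R x y)
    (hx : p x) (hy : ¬ p y) :
    ∃ u v, p u ∧ ¬ p v ∧ R u v ∧ Relation.ReflTransGen R v y := by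
  induction h using Relation.ReflTransGen.head_induction_on with
  | refl => exact absurd hx hy
  | @head u v huv hvy ih =>
    by_cases hv : p v
    · exact ih hv
    · exact ⟨u, v, hx, hv, huv, hvy⟩

theorem not_transGen_self_of_leftUnique (hR : Relator.LeftUnique R) (hx : ∀ z, ¬ R z x)
    (h : Relation.ReflTransGen R x y) : ¬ Relation.TransGen R y y := by
  induction h with
  | refl =>
    intro hcycle
    obtain ⟨z, -, hz⟩ := Relation.TransGen.tail'_iff.1 hcycle
    exact hx z hz
  | @tail u v _ huv ih =>
    intro hcycle
    obtain ⟨w, hvw, hwv⟩ := Relation.TransGen.tail'_iff.1 hcycle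
    obtain rfl := hR hwv huv
    exact ih (Relation.TransGen.head' hwv hvw)

end Relation

section OutTree

variable {α : Type*} [DecidableEq α] {A T : Finset (α × α)} {V₁ V₂ W : Finset α}
  {r a b c v x y : α}

theorem mem_dverts :
    v ∈ dverts r T ↔ v = r ∨ (∃ y, (v, y) ∈ T) ∨ ∃ x, (x, v) ∈ T := by
  simp [dverts]

theorem dInDeg_eq_zero_iff : dInDeg T v = 0 ↔ ∀ x, (x, v) ∉ T := by
  simp only [dInDeg, Finset.card_eq_zero, Finset.filter_eq_empty_iff, Prod.forall]
  exact ⟨fun h x hx => h x v hx rfl, fun h x y hxy hy => h x (hy ▸ hxy)⟩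

theorem dOutDeg_eq_zero_iff : dOutDeg T v = 0 ↔ ∀ y, (v, y) ∉ T := by
  simp only [dOutDeg, Finset.card_eq_zero, Finset.filter_eq_empty_iff, Prod.forall]
  exact ⟨fun h y hy => h v y hy rfl, fun h x y hxy hx => h y (hx ▸ hxy)⟩

theorem dInDeg_eq_one_iff : dInDeg T v = 1 ↔ ∃! x, (x, v) ∈ T := by
  rw [dInDeg, Finset.card_eq_one_iff_existsUnique]
  simp only [Finset.mem_filter]
  constructor
  · rintro ⟨⟨x, v⟩, ⟨hx, rfl⟩, huniq⟩
    exact ⟨x, hx, fun y hy => congrArg Prod.fst (huniq _ ⟨hy, rfl⟩)⟩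
  · rintro ⟨x, hx, huniq⟩
    refine ⟨(x, v), ⟨hx, rfl⟩, ?_⟩
    rintro ⟨y, v⟩ ⟨hy, rfl⟩
    exact Prod.ext (huniq y hy) rfl

namespace IsSpanningOutTreeOn

theorem of_leftUnique (hTA : T ⊆ A) (hr : r ∈ W) (hTW : ∀ x y, (x, y) ∈ T → x ∈ W ∧ y ∈ W)
    (hroot : ∀ x, (x, r) ∉ T) (huniq : ∀ x y v, (x, v) ∈ T → (y, v) ∈ T → x = y)
    (hreach : ∀ v ∈ W, DReach T r v) : IsSpanningOutTreeOn W A r T := by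
  have exists_parent : ∀ v ∈ W, v ≠ r → ∃ x, (x, v) ∈ T := fun v hv hvr =>
    ((hreach v hv).cases_tail.resolve_left hvr).imp fun _ h => h.2
  have hverts : dverts r T = W := by
    ext v
    rw [mem_dverts]
    constructor
    · rintro (rfl | ⟨y, h⟩ | ⟨x, h⟩)
      exacts [hr, (hTW _ _ h).1, (hTW _ _ h).2]
    · exact fun hv => or_iff_not_imp_left.2 fun hvr => .inr (exists_parent v hv hvr)
  refine ⟨⟨hTA, dInDeg_eq_zero_iff.2 hroot, fun v hv hvr => ?_, hverts ▸ hreach⟩, hverts⟩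
  obtain ⟨x, hx⟩ := exists_parent v (hverts ▸ hv) hvr
  exact dInDeg_eq_one_iff.2 ⟨x, hx, fun y hy => huniq y x v hy hx⟩

variable (h : IsSpanningOutTreeOn W A r T)
include h

theorem subset : T ⊆ A := h.1.1

theorem root_mem : r ∈ W := h.2 ▸ Finset.mem_insert_self _ _

theorem mem_left (hxy : (x, y) ∈ T) : x ∈ W := h.2 ▸ mem_dverts.2 (.inr (.inl ⟨y, hxy⟩))

theorem mem_right (hxy : (x, y) ∈ T) : y ∈ W := h.2 ▸ mem_dverts.2 (.inr (.inr ⟨x, hxy⟩))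

theorem notMem_root (x : α) : (x, r) ∉ T := dInDeg_eq_zero_iff.1 h.1.2.1 x

theorem leftUnique (hx : (x, v) ∈ T) (hy : (y, v) ∈ T) : x = y := by
  have hvr : v ≠ r := by
    rintro rfl
    exact h.notMem_root x hx
  have hv : v ∈ dverts r T := mem_dverts.2 (.inr (.inr ⟨x, hx⟩))
  exact (dInDeg_eq_one_iff.1 (h.1.2.2.1 v hv hvr)).unique hx hy

theorem reach (hv : v ∈ W) : DReach T r v := h.1.2.2.2 v (h.2.symm ▸ hv)

theorem not_reach_of_mem (hxy : (x, y) ∈ T) : ¬ DReach T y x := fun hyx =>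
  not_transGen_self_of_leftUnique (R := fun u v => (u, v) ∈ T)
    (fun _ _ _ hu hv => h.leftUnique hu hv) h.notMem_root
    (h.reach (h.mem_left hxy)) (Relation.TransGen.head' hxy hyx)

theorem ne_of_mem (hxy : (x, y) ∈ T) : x ≠ y := by
  rintro rfl
  exact h.not_reach_of_mem hxy .refl

theorem mem_dleaves_iff : v ∈ dleaves r T ↔ v ∈ W ∧ ∀ y, (v, y) ∉ T := by
  rw [dleaves, Finset.mem_filter, h.2, dOutDeg_eq_zero_iff]

theorem exists_cut_arc (hdisj : Disjoint V₁ V₂) (hr : r ∈ V₁) (hW : W ⊆ V₁ ∪ V₂)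
    (hc : c ∈ V₂) (hcW : c ∈ W) : ∃ u ∈ V₁, ∃ v ∈ V₂, (u, v) ∈ T ∧ DReach T v c := by
  obtain ⟨u, v, hu, hv, huv, hvc⟩ :=
    exists_rel_exit_of_reflTransGen (p := (· ∈ V₁)) (h.reach hcW) hr
      (Finset.disjoint_right.1 hdisj hc)
  exact ⟨u, hu, v, (Finset.mem_union.1 (hW (h.mem_right huv))).resolve_left hv, huv, hvc⟩

theorem notMem_of_cut_tail (hdisj : Disjoint V₁ V₂) (hr : r ∈ V₁) (hW : W ⊆ V₁ ∪ V₂)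
    (hcut : ∀ x ∈ V₁, ∀ y ∈ V₂, (x, y) ∈ A → x = a) (hx : x ∈ V₂) : (x, a) ∉ T := by
  intro hxa
  obtain ⟨u, hu, v, hv, huv, hvx⟩ := h.exists_cut_arc hdisj hr hW hx (h.mem_left hxa)
  obtain rfl := hcut u hu v hv (h.subset huv)
  exact h.not_reach_of_mem hxa (hvx.head huv)

end IsSpanningOutTreeOn

/-- The arc set of the contraction `G*`: the arc `(a, b)` is contracted into the vertex `a`, and
arcs between `a` and `b` disappear instead of becoming loops. -/
def contractArcs (A : Finset (α × α)) (a b : α) : Finset (α × α) :=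
  (A.filter fun p => p.1 ≠ b ∧ p.2 ≠ b) ∪
    ((A.filter fun p => p.1 = b ∧ p.2 ≠ a).image fun p => (a, p.2)) ∪
    ((A.filter fun p => p.2 = b ∧ p.1 ≠ a).image fun p => (p.1, a))

theorem mem_contractArcs : (x, y) ∈ contractArcs A a b ↔
    ((x, y) ∈ A ∧ x ≠ b ∧ y ≠ b) ∨ (x = a ∧ (b, y) ∈ A ∧ y ≠ a) ∨
      (y = a ∧ (x, b) ∈ A ∧ x ≠ a) := by
  simp only [contractArcs, Finset.mem_union, Finset.mem_filter, Finset.mem_image, Prod.mk.injEq,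
    Prod.exists]
  grind

theorem contractArcs_mono (h : T ⊆ A) : contractArcs T a b ⊆ contractArcs A a b := by
  rintro ⟨x, y⟩
  simp only [mem_contractArcs]
  exact Or.imp (And.imp_left (h ·)) (Or.imp (And.imp_right (And.imp_left (h ·)))
    (And.imp_right (And.imp_left (h ·))))

theorem eq_of_mem_contractArcs_of_cut (hdisj : Disjoint V₁ V₂) (ha : a ∈ V₁)
    (hcut : ∀ x ∈ V₁, ∀ y ∈ V₂, (x, y) ∈ A → x = a) (hx : x ∈ V₁) (hy : y ∈ V₂)
    (hxy : (x, y) ∈ contractArcs A a b) : x = a := by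
  rcases mem_contractArcs.1 hxy with ⟨hA, -⟩ | ⟨hxa, -⟩ | ⟨rfl, -⟩
  · exact hcut x hx y hy hA
  · exact hxa
  · exact absurd hy (Finset.disjoint_left.1 hdisj ha)

/-- The arc set obtained from `S` by splitting a vertex `b` off from `a`, the inverse of contracting
`(a, b)`: the arcs of `S` missing from `A` get the tail `b`, and `(a, b)` is added. It is meant for
`S` whose arcs outside `A` all have tail `a`. -/
def expandArcs (A S : Finset (α × α)) (a b : α) : Finset (α × α) :=
  insert (a, b) (S ∩ A ∪ (S \ A).image fun p => (b, p.2))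

theorem mem_expandArcs {S : Finset (α × α)} : (x, y) ∈ expandArcs A S a b ↔
    (x = a ∧ y = b) ∨ ((x, y) ∈ S ∧ (x, y) ∈ A) ∨ (x = b ∧ ∃ z, (z, y) ∈ S ∧ (z, y) ∉ A) := by
  simp only [expandArcs, Finset.mem_insert, Finset.mem_union, Finset.mem_inter, Finset.mem_image,
    Finset.mem_sdiff, Prod.mk.injEq, Prod.exists]
  grind

namespace IsSpanningOutTreeOn

section Contract

variable (h : IsSpanningOutTreeOn W A r T) (hab : (a, b) ∈ T)
include h hab

theorem mem_contractArcs_iff : (x, y) ∈ contractArcs T a b ↔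
    ((x, y) ∈ T ∧ x ≠ b ∧ y ≠ b) ∨ (x = a ∧ (b, y) ∈ T) := by
  have hba : (b, a) ∉ T := fun hba => h.not_reach_of_mem hab (.single hba)
  rw [mem_contractArcs]
  refine or_congr_right ⟨?_, fun ⟨hx, hby⟩ => .inl ⟨hx, hby, ?_⟩⟩
  · rintro (⟨hx, hby, -⟩ | ⟨-, hxb, hxa⟩)
    exacts [⟨hx, hby⟩, absurd (h.leftUnique hxb hab) hxa]
  · rintro rfl
    exact hba hby

theorem reach_contractArcs (hv : DReach T r v) :
    DReach (contractArcs T a b) r (if v = b then a else v) := by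
  have hrb : r ≠ b := by
    rintro rfl
    exact h.notMem_root a hab
  induction hv with
  | refl => rw [if_neg hrb]; exact .refl
  | @tail u v _ huv ih =>
    by_cases hvb : v = b
    · have hua : u = a := h.leftUnique (hvb ▸ huv) hab
      rw [hua, if_neg (h.ne_of_mem hab)] at ih
      rwa [if_pos hvb]
    · rw [if_neg hvb]
      refine ih.tail ((h.mem_contractArcs_iff hab).2 ?_)
      split_ifs with hub
      exacts [.inr ⟨rfl, hub ▸ huv⟩, .inl ⟨huv, hub, hvb⟩]

theorem contract :
    IsSpanningOutTreeOn (W.erase b) (contractArcs A a b) r (contractArcs T a b) := by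
  have hmem {x y : α} := h.mem_contractArcs_iff hab (x := x) (y := y)
  refine of_leftUnique (contractArcs_mono h.subset) (Finset.mem_erase.2 ⟨?_, h.root_mem⟩) ?_ ?_ ?_
    fun v hv => ?_
  · rintro rfl
    exact h.notMem_root a hab
  · intro x y hxy
    simp only [Finset.mem_erase]
    rcases hmem.1 hxy with ⟨hT, hx, hy⟩ | ⟨rfl, hT⟩
    · exact ⟨⟨hx, h.mem_left hT⟩, hy, h.mem_right hT⟩
    · exact ⟨⟨h.ne_of_mem hab, h.mem_left hab⟩, (h.ne_of_mem hT).symm, h.mem_right hT⟩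
  · intro x hx
    rcases hmem.1 hx with ⟨hT, -⟩ | ⟨-, hT⟩ <;> exact h.notMem_root _ hT
  · intro x y v hx hy
    rcases hmem.1 hx with ⟨hxT, hxb, -⟩ | ⟨rfl, hxT⟩ <;>
      rcases hmem.1 hy with ⟨hyT, hyb, -⟩ | ⟨rfl, hyT⟩
    · exact h.leftUnique hxT hyT
    · exact absurd (h.leftUnique hxT hyT) hxb
    · exact absurd (h.leftUnique hyT hxT) hyb
    · rfl
  · obtain ⟨hvb, hvW⟩ := Finset.mem_erase.1 hv
    simpa only [if_neg hvb] using h.reach_contractArcs hab (h.reach hvW)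

theorem dleaves_contractArcs (hbc : (b, c) ∈ T) :
    dleaves r (contractArcs T a b) = dleaves r T := by
  ext v
  rw [(h.contract hab).mem_dleaves_iff, h.mem_dleaves_iff, Finset.mem_erase]
  simp only [h.mem_contractArcs_iff hab]
  constructor
  · rintro ⟨⟨hvb, hvW⟩, hleaf⟩
    refine ⟨hvW, fun y hvy => ?_⟩
    by_cases hy : y = b
    · subst hy
      exact hleaf c (.inr ⟨h.leftUnique hvy hab, hbc⟩)
    · exact hleaf y (.inl ⟨hvy, hvb, hy⟩)
  · rintro ⟨hvW, hleaf⟩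
    refine ⟨⟨?_, hvW⟩, ?_⟩
    · rintro rfl
      exact hleaf c hbc
    · rintro y (⟨hvy, -⟩ | ⟨rfl, -⟩)
      exacts [hleaf y hvy, hleaf b hab]

end Contract

section Expand

variable {A' S : Finset (α × α)} (htail : ∀ x y, (x, y) ∈ S → (x, y) ∉ A → x = a)
include htail

theorem reach_expandArcs (hv : DReach S r v) : DReach (expandArcs A S a b) r v := by
  induction hv with
  | refl => exact .refl
  | @tail u v _ huv ih =>
    by_cases huvA : (u, v) ∈ A
    · exact ih.tail (mem_expandArcs.2 (.inr (.inl ⟨huv, huvA⟩)))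
    · obtain rfl := htail u v huv huvA
      have hub : (u, b) ∈ expandArcs A S u b := mem_expandArcs.2 (.inl ⟨rfl, rfl⟩)
      have hbv : (b, v) ∈ expandArcs A S u b := mem_expandArcs.2 (.inr (.inr ⟨rfl, u, huv, huvA⟩))
      exact (ih.tail hub).tail hbv

variable (h : IsSpanningOutTreeOn W A' r S) (ha : a ∈ W) (hb : b ∉ W)
  (hsub : expandArcs A S a b ⊆ A)
include h ha hb hsub

theorem expand : IsSpanningOutTreeOn (insert b W) A r (expandArcs A S a b) := by
  have hbS : ∀ x, (x, b) ∉ S := fun x hx => hb (h.mem_right hx)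
  refine of_leftUnique hsub (Finset.mem_insert_of_mem h.root_mem) ?_ ?_ ?_ fun v hv => ?_
  · intro x y hxy
    simp only [Finset.mem_insert]
    rcases mem_expandArcs.1 hxy with ⟨rfl, rfl⟩ | ⟨hS, -⟩ | ⟨rfl, z, hS, -⟩
    · exact ⟨.inr ha, .inl rfl⟩
    · exact ⟨.inr (h.mem_left hS), .inr (h.mem_right hS)⟩
    · exact ⟨.inl rfl, .inr (h.mem_right hS)⟩
  · intro x hx
    rcases mem_expandArcs.1 hx with ⟨-, rfl⟩ | ⟨hS, -⟩ | ⟨-, z, hS, -⟩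
    exacts [hb h.root_mem, h.notMem_root _ hS, h.notMem_root _ hS]
  · have tail_eq : ∀ x v, (x, v) ∈ expandArcs A S a b →
        (x = a ∧ v = b) ∨ ∃ z, (z, v) ∈ S ∧ x = if (z, v) ∈ A then z else b := by
      intro x v hxv
      rcases mem_expandArcs.1 hxv with hab | ⟨hS, hA⟩ | ⟨rfl, z, hS, hA⟩
      exacts [.inl hab, .inr ⟨x, hS, (if_pos hA).symm⟩, .inr ⟨z, hS, (if_neg hA).symm⟩]
    intro x y v hx hy
    rcases tail_eq x v hx with ⟨rfl, rfl⟩ | ⟨z, hz, rfl⟩ <;>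
      rcases tail_eq y v hy with ⟨rfl, hvb⟩ | ⟨w, hw, rfl⟩
    · rfl
    · exact absurd hw (hbS w)
    · exact absurd (hvb ▸ hz) (hbS z)
    · rw [h.leftUnique hz hw]
  · rcases Finset.mem_insert.1 hv with rfl | hvW
    · exact (reach_expandArcs htail (h.reach ha)).tail (mem_expandArcs.2 (.inl ⟨rfl, rfl⟩))
    · exact reach_expandArcs htail (h.reach hvW)

theorem dleaves_expandArcs (hS : (S \ A).Nonempty) :
    dleaves r (expandArcs A S a b) = dleaves r S := by
  obtain ⟨⟨d, c⟩, hdc⟩ := hS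
  obtain ⟨hdcS, hdcA⟩ := Finset.mem_sdiff.1 hdc
  obtain rfl := htail d c hdcS hdcA
  ext v
  rw [(h.expand htail ha hb hsub).mem_dleaves_iff, h.mem_dleaves_iff, Finset.mem_insert]
  simp only [mem_expandArcs]
  constructor
  · rintro ⟨hv, hleaf⟩
    have hvb : v ≠ b := by
      rintro rfl
      exact hleaf c (.inr (.inr ⟨rfl, d, hdcS, hdcA⟩))
    refine ⟨hv.resolve_left hvb, fun y hvy => ?_⟩
    by_cases hvyA : (v, y) ∈ A
    · exact hleaf y (.inr (.inl ⟨hvy, hvyA⟩))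
    · exact hleaf b (.inl ⟨htail v y hvy hvyA, rfl⟩)
  · rintro ⟨hvW, hleaf⟩
    refine ⟨.inr hvW, ?_⟩
    rintro y (⟨rfl, -⟩ | ⟨hvy, -⟩ | ⟨rfl, -⟩)
    exacts [hleaf c hdcS, hleaf y hvy, hb hvW]

end Expand

end IsSpanningOutTreeOn

section Cut

variable (hdisj : Disjoint V₁ V₂) (ha : a ∈ V₁) (hb : b ∈ V₂) (hr : r ∈ V₁)
  (honly : ∀ p ∈ A, p.1 ∈ V₁ → p.2 ∈ V₂ → p = (a, b))
include hdisj hr honly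

theorem IsSpanningOutTreeOn.mem_and_exists_mem_of_bridge (h : IsSpanningOutTreeOn (V₁ ∪ V₂) A r T)
    (hc : c ∈ V₂) (hcb : c ≠ b) : (a, b) ∈ T ∧ ∃ d, (b, d) ∈ T := by
  obtain ⟨u, hu, v, hv, huv, hvc⟩ :=
    h.exists_cut_arc hdisj hr subset_rfl hc (Finset.mem_union_right _ hc)
  obtain ⟨rfl, rfl⟩ := Prod.mk.inj (honly _ (h.subset huv) hu hv)
  obtain ⟨d, hbd, -⟩ := hvc.cases_head.resolve_left hcb.symm
  exact ⟨huv, d, hbd⟩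

variable {S : Finset (α × α)}
  (h : IsSpanningOutTreeOn ((V₁ ∪ V₂).erase b) (contractArcs A a b) r S)
include h

theorem IsSpanningOutTreeOn.sdiff_nonempty_of_bridge (hc : c ∈ V₂) (hcb : c ≠ b) :
    (S \ A).Nonempty := by
  obtain ⟨u, hu, v, hv, huv, -⟩ := h.exists_cut_arc hdisj hr (Finset.erase_subset _ _) hc
    (Finset.mem_erase.2 ⟨hcb, Finset.mem_union_right _ hc⟩)
  refine ⟨(u, v), Finset.mem_sdiff.2 ⟨huv, fun huvA => ?_⟩⟩
  have hvb : v = b := congrArg Prod.snd (honly _ huvA hu hv)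
  exact Finset.ne_of_mem_erase (h.mem_right huv) hvb

include ha hb

theorem IsSpanningOutTreeOn.tail_eq_of_bridge (hxy : (x, y) ∈ S) (hxyA : (x, y) ∉ A) :
    x = a ∧ (b, y) ∈ A := by
  have hcut : ∀ x ∈ V₁, ∀ y ∈ V₂, (x, y) ∈ A → x = a := fun x hx y hy hA =>
    congrArg Prod.fst (honly _ hA hx hy)
  rcases mem_contractArcs.1 (h.subset hxy) with ⟨hA, -⟩ | ⟨hx, hby, -⟩ | ⟨rfl, hxb, hxa⟩
  · exact absurd hA hxyA
  · exact ⟨hx, hby⟩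
  rcases Finset.mem_union.1 (Finset.mem_of_mem_erase (h.mem_left hxy)) with hx | hx
  · exact absurd (hcut x hx b hb hxb) hxa
  · refine absurd hxy (h.notMem_of_cut_tail hdisj hr (Finset.erase_subset _ _) ?_ hx)
    exact fun u hu v hv => eq_of_mem_contractArcs_of_cut hdisj ha hcut hu hv

theorem IsSpanningOutTreeOn.expandArcs_subset_of_bridge (hab : (a, b) ∈ A) :
    expandArcs A S a b ⊆ A := by
  rintro ⟨x, y⟩ hxy
  rcases mem_expandArcs.1 hxy with ⟨rfl, rfl⟩ | ⟨-, hA⟩ | ⟨rfl, z, hS, hA⟩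
  exacts [hab, hA, (h.tail_eq_of_bridge hdisj ha hb hr honly hS hA).2]

end Cut

theorem stmt10_general (A : Finset (α × α)) (V₁ V₂ : Finset α) (r a b : α)
    (hdisj : Disjoint V₁ V₂) (ha : a ∈ V₁) (hb : b ∈ V₂) (hr : r ∈ V₁) (hV₂ : 2 ≤ V₂.card)
    (hab : (a, b) ∈ A) (honly : ∀ p ∈ A, p.1 ∈ V₁ → p.2 ∈ V₂ → p = (a, b))
    (P : Finset α → Prop) :
    (∃ T, IsSpanningOutTreeOn (V₁ ∪ V₂) A r T ∧ P (dleaves r T)) ↔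
      ∃ T, IsSpanningOutTreeOn ((V₁ ∪ V₂).erase b) (contractArcs A a b) r T ∧
        P (dleaves r T) := by
  obtain ⟨c, hc, hcb⟩ : ∃ c ∈ V₂, c ≠ b := Finset.exists_mem_ne hV₂ b
  constructor
  · rintro ⟨T, hT, hP⟩
    obtain ⟨habT, d, hbd⟩ := hT.mem_and_exists_mem_of_bridge hdisj hr honly hc hcb
    exact ⟨contractArcs T a b, hT.contract habT, (hT.dleaves_contractArcs habT hbd).symm ▸ hP⟩
  · rintro ⟨S, hS, hP⟩
    have haW : a ∈ (V₁ ∪ V₂).erase b :=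
      Finset.mem_erase.2 ⟨hdisj.forall_ne_finset ha hb, Finset.mem_union_left _ ha⟩
    have hbW : b ∉ (V₁ ∪ V₂).erase b := Finset.notMem_erase _ _
    have htail : ∀ x y, (x, y) ∈ S → (x, y) ∉ A → x = a := fun x y hxy hxyA =>
      (hS.tail_eq_of_bridge hdisj ha hb hr honly hxy hxyA).1
    have hsub := hS.expandArcs_subset_of_bridge hdisj ha hb hr honly hab
    have hne := hS.sdiff_nonempty_of_bridge hdisj hr honly hc hcb
    have hT := hS.expand htail haW hbW hsub
    rw [Finset.insert_erase (Finset.mem_union_right _ hb)] at hT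
    exact ⟨expandArcs A S a b, hT, (hS.dleaves_expandArcs htail haW hbW hsub hne).symm ▸ hP⟩

end OutTree

theorem stmt10 (A : Finset (V × V)) (V₁ V₂ : Finset V) (r a b : V)
    (hA : DLoopless A) (hpart : V₁ ∪ V₂ = Finset.univ)
    (hdisj : Disjoint V₁ V₂) (ha : a ∈ V₁) (hb : b ∈ V₂) (hr : r ∈ V₁)
    (hV₂ : 2 ≤ V₂.card) (hab : (a, b) ∈ A)
    (honly : ∀ p ∈ A, p.1 ∈ V₁ → p.2 ∈ V₂ → p = (a, b)) (k : ℕ) :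
    (∃ T : Finset (V × V), IsSpanningOutTreeOn Finset.univ A r T ∧
        k ≤ (dleaves r T).card) ↔
      (∃ T : Finset (V × V),
        IsSpanningOutTreeOn (Finset.univ.erase b)
          ((A.filter fun p => p.1 ≠ b ∧ p.2 ≠ b) ∪
            ((A.filter fun p => p.1 = b ∧ p.2 ≠ a).image fun p => (a, p.2)) ∪
            ((A.filter fun p => p.2 = b ∧ p.1 ≠ a).image fun p => (p.1, a)))
          r T ∧
        k ≤ (dleaves r T).card) := by
  rw [← hpart]
  exact stmt10_general A V₁ V₂ r a b hdisj ha hb hr hV₂ hab honly fun L => k ≤ L.card
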